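/- For every integer t ≥ 3, the monomial w_2^{2^t-4}·w_4^{2^{t-2}-1} does not belong to the ideal I_{2^t,4} (equivalently, its image in F_2[w_2,w_3,w_4]/I_{2^t,4} is nonzero). This monomial is a nontrivial product of 2^t + 2^{t-2} - 5 positive-degree generators, realizing the cup-length of the subalgebra W_{2^t+1,4} of H^*(G̃_{2^t+1,4}; F_2). -/

import Mathlib

open MvPolynomial

/-- The polynomials `g_r = g_r^{(4)}` in `F_2[w_2,w_3,w_4]` (variables `X 0 = w_2`,
`X 1 = w_3`, `X 2 = w_4`): `g_0 = 1`, `g_r = 0` for `r < 0`, and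
`g_r = w_2·g_{r-2} + w_3·g_{r-3} + w_4·g_{r-4}` for `r ≥ 1`. -/
noncomputable def g4 : ℤ → MvPolynomial (Fin 3) (ZMod 2)
  | r =>
    if r ≤ 0 then (if r = 0 then 1 else 0)
    else X 0 * g4 (r - 2) + X 1 * g4 (r - 3) + X 2 * g4 (r - 4)
  termination_by r => r.toNat
  decreasing_by all_goals omega

/-- The ideal `I_{n,4} = (g_{n-3}, g_{n-2}, g_{n-1}, g_n)` of `F_2[w_2,w_3,w_4]`. -/
noncomputable def I4 (n : ℤ) : Ideal (MvPolynomial (Fin 3) (ZMod 2)) :=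
  Ideal.span {g4 (n - 3), g4 (n - 2), g4 (n - 1), g4 n}

/-!
Write `a, b, c` for `g_{2^t-2}, g_{2^t-1}, g_{2^t}` and `a', b', c'` for the same polynomials at
`t + 1`. As `g_{2^t-3} = 0`, these generate `I_{2^t,4}` and `I_{2^{t+1},4}`, and in characteristic
two

  `a' = w₂ a² + b²`, `b' = w₃ a²`, `c' = c² + w₂ b² + w₄ a²`.

Since `w₃, a', c'` is a regular sequence, `w₃ u ∈ I_{2^{t+1},4}` forces `u` into the Frobenius power
`(a², b², c²)` of `I_{2^t,4}`, and if `u = w₂ w₃ w₄ v² + w₃ w₄ w²`, then a Cartier operator extracts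
`v ∈ I_{2^t,4}`. This applies to the polynomials `w₂^{2^t-2} f² w₄^{2^{t-1}-1}` with `f ≡ a` modulo
`w₃`: modulo `a'` they are of the form `w₃ u`, and the resulting `v` is a polynomial of the same
shape for `I_{2^t,4}`. The choice `f = w₂^{2^{t-1}-1}` gives the monomial
`w₂^{2^{t+1}-4} w₄^{2^{t-1}-1}`, and the descent ends at `I_{4,4} ⊆ (w₂, w₃, w₄)` with an `f²` of
constant term `1`.
-/

section Cartier

variable {σ R : Type*} [CommSemiring R] (p : ℕ) [NeZero p] (e : σ →₀ ℕ)

/-- The Cartier-type operator on `R[X_i : i ∈ σ]` that sends `X ^ (p • m + e)` to `X ^ m` and kills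
all other monomials. Over `ZMod p`, and if all exponents in `e` are below `p`, it is
`p⁻¹`-linear, so that it maps the Frobenius power of an ideal into that ideal. -/
noncomputable def cartier : MvPolynomial σ R →+ MvPolynomial σ R :=
  AddMonoidAlgebra.comapDomainAddMonoidHom (fun m ↦ p • m + e) fun _ _ h ↦
    (nsmul_right_inj (NeZero.ne p)).1 (add_right_cancel h)

theorem coeff_cartier (f : MvPolynomial σ R) (m : σ →₀ ℕ) :
    (cartier p e f).coeff m = f.coeff (p • m + e) :=
  rfl

theorem cartier_monomial (r : R) : cartier p e (monomial e r) = C r := by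
  classical
  ext m
  simp [coeff_cartier, coeff_monomial, coeff_C, NeZero.ne p, eq_comm]

theorem cartier_monomial_of_forall_ne {d : σ →₀ ℕ} (hd : ∀ m, d ≠ p • m + e) (r : R) :
    cartier p e (monomial d r) = 0 := by
  classical
  ext m
  simp [coeff_cartier, coeff_monomial, hd m]

variable {e} in
theorem cartier_mul_expand (he : ∀ i, e i < p) (f g : MvPolynomial σ R) :
    cartier p e (f * expand p g) = cartier p e f * g := by
  classical
  induction g using MvPolynomial.induction_on' with
  | add g h hg hh => simp only [map_add, mul_add, hg, hh]
  | monomial d r =>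
    ext m
    have smul_le_iff : p • d ≤ p • m + e ↔ d ≤ m := by
      refine ⟨fun h i ↦ ?_, fun h ↦ le_add_right (nsmul_le_nsmul_right h p)⟩
      have hi : p * d i < p * (m i + 1) := (h i).trans_lt (by simpa [mul_add] using he i)
      exact Nat.lt_succ_iff.1 (lt_of_mul_lt_mul_left' hi)
    have sub_eq (h : d ≤ m) : p • m + e - p • d = p • (m - d) + e := by
      ext i
      simp [Nat.mul_sub, Nat.sub_add_comm (Nat.mul_le_mul_left p (h i))]
    rw [expand_monomial, coeff_cartier, coeff_mul_monomial', coeff_mul_monomial', coeff_cartier]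
    by_cases h : d ≤ m
    · rw [if_pos (smul_le_iff.2 h), if_pos h, sub_eq h]
    · rw [if_neg (mt smul_le_iff.1 h), if_neg h]

end Cartier

section CartierZMod

variable {σ : Type*} {p : ℕ} [Fact p.Prime] {e : σ →₀ ℕ}

theorem cartier_mul_pow (he : ∀ i, e i < p) (f g : MvPolynomial σ (ZMod p)) :
    cartier p e (f * g ^ p) = cartier p e f * g := by
  rw [← expand_zmod, cartier_mul_expand p he]

theorem cartier_mem_of_mem_map_frobenius (he : ∀ i, e i < p)
    {J : Ideal (MvPolynomial σ (ZMod p))} {f : MvPolynomial σ (ZMod p)}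
    (hf : f ∈ J.map (frobenius _ p)) : cartier p e f ∈ J := by
  suffices ∀ h, cartier p e (h * f) ∈ J by simpa using this 1
  induction hf using Submodule.span_induction with
  | mem _ hg =>
    obtain ⟨g, hg, rfl⟩ := hg
    intro h
    rw [frobenius_def, cartier_mul_pow he]
    exact J.mul_mem_left _ hg
  | zero => simp
  | add f g _ _ hf hg =>
    exact fun h ↦ by simpa only [mul_add, map_add] using J.add_mem (hf h) (hg h)
  | smul r f _ hf => exact fun h ↦ by simpa only [smul_eq_mul, mul_assoc] using hf (h * r)

theorem mem_of_X_mul_sq_sub_mem_map_frobenius {J : Ideal (MvPolynomial (Fin 3) (ZMod 2))}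
    {v w : MvPolynomial (Fin 3) (ZMod 2)}
    (h : X 0 * X 1 * X 2 * v ^ 2 - X 1 * X 2 * w ^ 2 ∈ J.map (frobenius _ 2)) : v ∈ J := by
  let e : Fin 3 →₀ ℕ := .single 0 1 + .single 1 1 + .single 2 1
  have he : ∀ i, e i < 2 := by
    intro i
    fin_cases i <;> simp [e]
  have cartier_X_mul_X_mul_X : cartier 2 e (X 0 * X 1 * X 2 : MvPolynomial _ (ZMod 2)) = 1 := by
    simpa [X, monomial_mul, e] using cartier_monomial 2 e (1 : ZMod 2)
  have cartier_X_mul_X : cartier 2 e (X 1 * X 2 : MvPolynomial _ (ZMod 2)) = 0 := by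
    simp only [X, monomial_mul]
    refine cartier_monomial_of_forall_ne 2 e (fun m hm ↦ ?_) _
    have := DFunLike.congr_fun hm 0
    simp [e] at this
  simpa [cartier_mul_pow he, cartier_X_mul_X_mul_X, cartier_X_mul_X] using
    cartier_mem_of_mem_map_frobenius he h

end CartierZMod

section SetVariableZero

variable {σ R : Type*} [CommRing R]

open Classical in
/-- The substitution `X i = 0`, as a retraction of `R[X_j : j ∈ σ]` with kernel `(X i)`. -/
noncomputable def setZero (i : σ) : MvPolynomial σ R →ₐ[R] MvPolynomial σ R :=
  aeval (Function.update X i 0)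

theorem setZero_X_self (i : σ) : setZero i (X i : MvPolynomial σ R) = 0 := by
  simp [setZero]

theorem setZero_X_of_ne {i j : σ} (h : j ≠ i) : setZero i (X j : MvPolynomial σ R) = X j := by
  simp [setZero, h]

theorem X_dvd_sub_setZero (i : σ) (f : MvPolynomial σ R) : X i ∣ f - setZero i f := by
  rw [← Ideal.mem_span_singleton, ← Ideal.Quotient.eq]
  let π := Ideal.Quotient.mkₐ R (Ideal.span {(X i : MvPolynomial σ R)})
  suffices π = π.comp (setZero i) from DFunLike.congr_fun this f
  ext j
  rcases eq_or_ne j i with rfl | hj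
  · simp [π, setZero_X_self]
  · simp [setZero_X_of_ne hj]

theorem X_dvd_iff_setZero_eq_zero {i : σ} {f : MvPolynomial σ R} :
    X i ∣ f ↔ setZero i f = 0 := by
  constructor
  · rintro ⟨g, rfl⟩
    rw [map_mul, setZero_X_self, zero_mul]
  · intro h
    simpa only [h, sub_zero] using X_dvd_sub_setZero i f

variable [IsDomain R] {i j : σ} {n : ℕ} {a c : MvPolynomial σ R}

/-- `X i, a, c` is a regular sequence: modulo `X i`, every syzygy of `(a, c)` is a multiple of the
Koszul relation. -/
theorem exists_X_dvd_of_X_dvd_mul_add_mul (hij : j ≠ i) (ha : X i ∣ a - X j ^ n)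
    (hc : ¬ X j ∣ setZero i c) {α γ : MvPolynomial σ R} (h : X i ∣ α * a + γ * c) :
    ∃ δ, X i ∣ α + δ * c ∧ X i ∣ γ - δ * a := by
  have ha' : setZero i a = X j ^ n := by
    simpa [X_dvd_iff_setZero_eq_zero, setZero_X_of_ne hij, sub_eq_zero] using ha
  have hsyz : setZero i α * X j ^ n + setZero i γ * setZero i c = 0 := by
    simpa [X_dvd_iff_setZero_eq_zero, ha'] using h
  obtain ⟨δ, hδ⟩ : X j ^ n ∣ setZero i γ :=
    (X_prime (R := R)).pow_dvd_of_dvd_mul_right n hc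
      ⟨-setZero i α, by linear_combination hsyz⟩
  have hα : setZero i α = -(δ * setZero i c) :=
    mul_right_cancel₀ (pow_ne_zero n (X_ne_zero (R := R) j)) (by
      linear_combination hsyz - setZero i c * hδ)
  refine ⟨δ, ?_, ?_⟩
  · rw [show α + δ * c = (α - setZero i α) + δ * (c - setZero i c) by rw [hα]; ring]
    exact dvd_add (X_dvd_sub_setZero i α) ((X_dvd_sub_setZero i c).mul_left δ)
  · rw [show γ - δ * a = (γ - setZero i γ) - δ * (a - X j ^ n) by rw [hδ]; ring]
    exact dvd_sub (X_dvd_sub_setZero i γ) (ha.mul_left δ)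

theorem mem_span_of_X_mul_mem_span (hij : j ≠ i) (ha : X i ∣ a - X j ^ n)
    (hc : ¬ X j ∣ setZero i c) {s u : MvPolynomial σ R}
    (h : X i * u ∈ Ideal.span {a, X i * s, c}) : u ∈ Ideal.span {a, s, c} := by
  obtain ⟨α, β, γ, h⟩ := Submodule.mem_span_triple.1 h
  simp only [smul_eq_mul] at h
  obtain ⟨δ, ⟨α', hα⟩, γ', hγ⟩ := exists_X_dvd_of_X_dvd_mul_add_mul hij ha hc
    (α := α) (γ := γ) ⟨u - β * s, by linear_combination h⟩
  refine Submodule.mem_span_triple.2 ⟨α', β, γ', ?_⟩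
  apply mul_left_cancel₀ (X_ne_zero (R := R) i)
  simp only [smul_eq_mul]
  linear_combination h - a * hα - c * hγ

end SetVariableZero

section Recurrence

local notation "w₂" => (X 0 : MvPolynomial (Fin 3) (ZMod 2))
local notation "w₃" => (X 1 : MvPolynomial (Fin 3) (ZMod 2))
local notation "w₄" => (X 2 : MvPolynomial (Fin 3) (ZMod 2))

theorem g4_of_neg {r : ℤ} (hr : r < 0) : g4 r = 0 := by
  rw [g4, if_pos hr.le, if_neg hr.ne]

theorem g4_zero : g4 0 = 1 := by
  simp [g4]

theorem g4_of_ne_zero {r : ℤ} (hr : r ≠ 0) :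
    g4 r = w₂ * g4 (r - 2) + w₃ * g4 (r - 3) + w₄ * g4 (r - 4) := by
  rcases hr.lt_or_gt with hr | hr
  · simp [g4_of_neg hr, g4_of_neg (show r - 2 < 0 by omega), g4_of_neg (show r - 3 < 0 by omega),
      g4_of_neg (show r - 4 < 0 by omega)]
  · rw [g4, if_neg hr.not_ge]

/-- With `P = 1 + w₂ T² + w₃ T³ + w₄ T⁴` and `∑ g_r T ^ r = P⁻¹`, these are the even and odd parts
of `P⁻¹ = P * (P⁻¹) ^ 2`, squaring being additive in characteristic two. -/
theorem g4_two_mul_and_two_mul_add_one (m : ℤ) :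
    g4 (2 * m) = g4 m ^ 2 + w₂ * g4 (m - 1) ^ 2 + w₄ * g4 (m - 2) ^ 2 ∧
      g4 (2 * m + 1) = w₃ * g4 (m - 1) ^ 2 := by
  rcases lt_trichotomy m 0 with hm | rfl | hm
  · simp [g4_of_neg, hm, show m - 1 < 0 by omega, show m - 2 < 0 by omega,
      show 2 * m < 0 by omega, show 2 * m + 1 < 0 by omega]
  · simp [g4_of_ne_zero one_ne_zero, g4_of_neg, g4_zero]
  obtain ⟨even₁, odd₁⟩ := g4_two_mul_and_two_mul_add_one (m - 1)
  obtain ⟨even₂, odd₂⟩ := g4_two_mul_and_two_mul_add_one (m - 2)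
  have two_eq_zero : (2 : MvPolynomial (Fin 3) (ZMod 2)) = 0 := CharTwo.two_eq_zero
  rw [show 2 * (m - 1) = 2 * m - 2 by ring, show m - 1 - 1 = m - 2 by ring,
    show m - 1 - 2 = m - 3 by ring] at even₁
  rw [show 2 * (m - 1) + 1 = 2 * m - 1 by ring, show m - 1 - 1 = m - 2 by ring] at odd₁
  rw [show 2 * (m - 2) = 2 * m - 4 by ring, show m - 2 - 1 = m - 3 by ring,
    show m - 2 - 2 = m - 4 by ring] at even₂
  rw [show 2 * (m - 2) + 1 = 2 * m - 3 by ring, show m - 2 - 1 = m - 3 by ring] at odd₂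
  constructor
  · rw [g4_of_ne_zero (r := 2 * m) (by omega), g4_of_ne_zero hm.ne', even₁, odd₂, even₂]
    simp only [CharTwo.add_sq]
    linear_combination (w₂ * w₄ * g4 (m - 3) ^ 2) * two_eq_zero
  · rw [g4_of_ne_zero (r := 2 * m + 1) (by omega), show 2 * m + 1 - 2 = 2 * m - 1 by ring,
      show 2 * m + 1 - 3 = 2 * m - 2 by ring, show 2 * m + 1 - 4 = 2 * m - 3 by ring,
      odd₁, even₁, odd₂]
    linear_combination (w₂ * w₃ * g4 (m - 2) ^ 2 + w₃ * w₄ * g4 (m - 3) ^ 2) * two_eq_zero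
termination_by m.toNat
decreasing_by all_goals omega

theorem g4_two_mul (m : ℤ) :
    g4 (2 * m) = g4 m ^ 2 + w₂ * g4 (m - 1) ^ 2 + w₄ * g4 (m - 2) ^ 2 :=
  (g4_two_mul_and_two_mul_add_one m).1

theorem g4_two_mul_add_one (m : ℤ) : g4 (2 * m + 1) = w₃ * g4 (m - 1) ^ 2 :=
  (g4_two_mul_and_two_mul_add_one m).2

theorem g4_two_pow_sub_three (t : ℕ) : g4 (2 ^ (t + 1) - 3) = 0 := by
  induction t with
  | zero => exact g4_of_neg (by norm_num)
  | succ t ih =>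
    rw [show (2 : ℤ) ^ (t + 2) - 3 = 2 * (2 ^ (t + 1) - 2) + 1 by ring, g4_two_mul_add_one,
      show (2 : ℤ) ^ (t + 1) - 2 - 1 = 2 ^ (t + 1) - 3 by ring, ih]
    simp

theorem g4_two_pow_sub_two (t : ℕ) :
    g4 (2 ^ (t + 2) - 2) = w₂ * g4 (2 ^ (t + 1) - 2) ^ 2 + g4 (2 ^ (t + 1) - 1) ^ 2 := by
  rw [show (2 : ℤ) ^ (t + 2) - 2 = 2 * (2 ^ (t + 1) - 1) by ring, g4_two_mul,
    show (2 : ℤ) ^ (t + 1) - 1 - 1 = 2 ^ (t + 1) - 2 by ring,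
    show (2 : ℤ) ^ (t + 1) - 1 - 2 = 2 ^ (t + 1) - 3 by ring, g4_two_pow_sub_three]
  ring

theorem g4_two_pow_sub_one (t : ℕ) : g4 (2 ^ (t + 1) - 1) = w₃ * g4 (2 ^ t - 2) ^ 2 := by
  rw [show (2 : ℤ) ^ (t + 1) - 1 = 2 * (2 ^ t - 1) + 1 by ring, g4_two_mul_add_one,
    show (2 : ℤ) ^ t - 1 - 1 = 2 ^ t - 2 by ring]

theorem g4_two_pow (t : ℕ) :
    g4 (2 ^ (t + 1)) = g4 (2 ^ t) ^ 2 + w₂ * g4 (2 ^ t - 1) ^ 2 + w₄ * g4 (2 ^ t - 2) ^ 2 := by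
  rw [pow_succ', g4_two_mul]

theorem X_one_dvd_g4_two_pow_sub_two_sub (t : ℕ) :
    w₃ ∣ g4 (2 ^ (t + 1) - 2) - w₂ ^ (2 ^ t - 1) := by
  induction t with
  | zero => simp [g4_zero]
  | succ t ih =>
    obtain ⟨r, hr⟩ := ih
    have exponent : 2 ^ (t + 1) - 1 = 2 * (2 ^ t - 1) + 1 := by
      have := Nat.one_le_two_pow (n := t)
      omega
    rw [g4_two_pow_sub_two, g4_two_pow_sub_one, sub_eq_iff_eq_add.1 hr, CharTwo.add_sq, exponent]
    exact ⟨w₂ * w₃ * r ^ 2 + w₃ * g4 (2 ^ t - 2) ^ 4, by ring⟩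

theorem eval_g4_four_mul (m : ℕ) : eval ![0, 0, 1] (g4 (4 * m)) = 1 := by
  induction m with
  | zero => simp [g4_zero]
  | succ m ih =>
    rw [g4_of_ne_zero (by positivity), show 4 * ((m + 1 : ℕ) : ℤ) - 4 = 4 * m by push_cast; ring]
    simp [ih]

theorem not_X_zero_dvd_setZero_g4_two_pow (t : ℕ) : ¬ w₂ ∣ setZero 1 (g4 (2 ^ (t + 2))) := by
  rintro ⟨f, hf⟩
  have eval_setZero : eval ![0, 0, 1] (setZero 1 (g4 (2 ^ (t + 2)))) = 1 := by
    obtain ⟨f', hf'⟩ := X_dvd_sub_setZero 1 (g4 (2 ^ (t + 2)))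
    rw [← sub_sub_cancel (g4 (2 ^ (t + 2))) (setZero 1 _), hf', pow_add, mul_comm]
    simpa using eval_g4_four_mul (2 ^ t)
  simp [hf] at eval_setZero

theorem eval_zero_g4_of_pos {r : ℤ} (hr : 0 < r) : eval 0 (g4 r) = 0 := by
  simp [g4_of_ne_zero hr.ne']

theorem I4_le_ker_eval_zero {n : ℤ} (hn : 3 < n) : I4 n ≤ RingHom.ker (eval 0) := by
  rw [I4, Ideal.span_le]
  rintro _ (rfl | rfl | rfl | rfl) <;> exact eval_zero_g4_of_pos (by omega)

theorem I4_two_pow (t : ℕ) :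
    I4 (2 ^ (t + 1)) =
      Ideal.span {g4 (2 ^ (t + 1) - 2), g4 (2 ^ (t + 1) - 1), g4 (2 ^ (t + 1))} := by
  rw [I4, g4_two_pow_sub_three, Ideal.span_insert_zero]

theorem mem_map_frobenius_of_X_one_mul_mem_I4 {t : ℕ} {u : MvPolynomial (Fin 3) (ZMod 2)}
    (hu : w₃ * u ∈ I4 (2 ^ (t + 2))) : u ∈ (I4 (2 ^ (t + 1))).map (frobenius _ 2) := by
  set F := (I4 (2 ^ (t + 1))).map (frobenius _ 2)
  have sq_mem {f} (hf : f ∈ I4 (2 ^ (t + 1))) : f ^ 2 ∈ F := Ideal.mem_map_of_mem (frobenius _ 2) hf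
  have ha : g4 (2 ^ (t + 1) - 2) ^ 2 ∈ F := sq_mem (Ideal.subset_span (by simp))
  have hb : g4 (2 ^ (t + 1) - 1) ^ 2 ∈ F := sq_mem (Ideal.subset_span (by simp))
  have hc : g4 (2 ^ (t + 1)) ^ 2 ∈ F := sq_mem (Ideal.subset_span (by simp))
  rw [I4_two_pow, g4_two_pow_sub_one (t + 1)] at hu
  refine (Ideal.span_le.2 ?_) (mem_span_of_X_mul_mem_span (j := 0) (by decide)
    (X_one_dvd_g4_two_pow_sub_two_sub (t + 1)) (not_X_zero_dvd_setZero_g4_two_pow t) hu)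
  rintro _ (rfl | rfl | rfl)
  · rw [g4_two_pow_sub_two]
    exact F.add_mem (F.mul_mem_left _ ha) hb
  · exact ha
  · rw [g4_two_pow]
    exact F.add_mem (F.add_mem hc (F.mul_mem_left _ hb)) (F.mul_mem_left _ ha)

theorem mem_I4_two_pow_of_mem_I4_two_pow_succ {t p q : ℕ} {f : MvPolynomial (Fin 3) (ZMod 2)}
    (hf : w₃ ∣ f - g4 (2 ^ (t + 1) - 2))
    (h : w₂ ^ (2 * p + 2) * f ^ 2 * w₄ ^ (2 * q + 1) ∈ I4 (2 ^ (t + 2))) :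
    w₂ ^ p * g4 (2 ^ t - 2) ^ 2 * w₄ ^ q ∈ I4 (2 ^ (t + 1)) := by
  obtain ⟨r, hr⟩ := hf
  refine mem_of_X_mul_sq_sub_mem_map_frobenius (w := w₂ ^ (p + 1) * r * w₄ ^ q)
    (mem_map_frobenius_of_X_one_mul_mem_I4 ?_)
  have ha : g4 (2 ^ (t + 2) - 2) ∈ I4 (2 ^ (t + 2)) := Ideal.subset_span (by simp)
  convert Ideal.sub_mem _ (Ideal.mul_mem_left _ (w₂ ^ (2 * p + 1) * w₄ ^ (2 * q + 1)) ha) h using 1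
  rw [g4_two_pow_sub_two, g4_two_pow_sub_one, sub_eq_iff_eq_add.1 hr, CharTwo.add_sq]
  ring

theorem pow_mul_sq_mul_pow_notMem_I4 (k : ℕ) {f : MvPolynomial (Fin 3) (ZMod 2)}
    (hf : w₃ ∣ f - g4 (2 ^ (k + 1) - 2)) :
    w₂ ^ (2 ^ (k + 1) - 2) * f ^ 2 * w₄ ^ (2 ^ k - 1) ∉ I4 (2 ^ (k + 2)) := by
  induction k generalizing f with
  | zero =>
    intro h
    obtain ⟨r, hr⟩ := hf
    have := I4_le_ker_eval_zero (by norm_num) h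
    simp [sub_eq_iff_eq_add.1 hr, g4_zero] at this
  | succ k ih =>
    intro h
    have := Nat.one_le_two_pow (n := k)
    refine ih (f := g4 (2 ^ (k + 1) - 2)) (by simp) (mem_I4_two_pow_of_mem_I4_two_pow_succ hf ?_)
    convert h using 4 <;> omega

end Recurrence

/-- For every `t ≥ 3`, the monomial `w_2^{2^t-4} w_4^{2^{t-2}-1}` does not belong to
`I_{2^t,4}` (equivalently, its image in `F_2[w_2,w_3,w_4]/I_{2^t,4}` is nonzero); it is a
nontrivial product of `2^t + 2^{t-2} - 5` positive-degree generators, realizing the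
cup-length of the subalgebra `W_{2^t+1,4}` of `H^*(G̃_{2^t+1,4}; F_2)`. -/
theorem stmt13 (t : ℕ) (ht : 3 ≤ t) :
    (X 0 : MvPolynomial (Fin 3) (ZMod 2)) ^ (2 ^ t - 4) * X 2 ^ (2 ^ (t - 2) - 1)
      ∉ I4 (2 ^ t) := by
  obtain ⟨k, rfl⟩ := Nat.exists_eq_add_of_le' (show 2 ≤ t by omega)
  have exponent : 2 ^ (k + 2) - 4 = 2 ^ (k + 1) - 2 + (2 ^ k - 1) * 2 := by
    have := Nat.one_le_two_pow (n := k)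
    simp only [pow_succ]
    omega
  rw [exponent, pow_add (X 0), pow_mul, Nat.add_sub_cancel]
  exact pow_mul_sq_mul_pow_notMem_I4 k
    ((dvd_sub_comm ..).1 (X_one_dvd_g4_two_pow_sub_two_sub k))
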